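/- Let A and B be abelian categories with enough injectives, and let L : B ⥤ A and U : A ⥤ B be an adjoint pair (L left adjoint to U) with both L and U exact. Assume that every object N of A admits a two-step resolution by objects induced from B, i.e., an exact sequence 0 → L(N₁) → L(N₂) → N → 0 for some objects N₁, N₂ of B. Fix a natural number d. If every object of B admits an injective resolution of length at most d, then every object of A admits an injective resolution of length at most d + 1. -/

import Mathlib

open CategoryTheory Limits

/-- `M` admits an injective resolution of length at most `d`, i.e. an exact sequence
`0 → M → I⁰ → I¹ → ⋯ → I^d → 0` with every `I^j` injective.  We encode the sequence by
extending it by zero objects in degrees `> d`. -/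
def HasInjectiveResolutionOfLength {C : Type*} [Category C] [Abelian C] (d : ℕ) (M : C) :
    Prop :=
  ∃ (I : ℕ → C) (ι : M ⟶ I 0) (δ : ∀ j : ℕ, I j ⟶ I (j + 1))
    (w0 : ι ≫ δ 0 = 0) (w : ∀ j : ℕ, δ j ≫ δ (j + 1) = 0),
    (∀ j : ℕ, j ≤ d → Injective (I j)) ∧
    (∀ j : ℕ, d < j → IsZero (I j)) ∧
    Mono ι ∧
    (ShortComplex.mk ι (δ 0) w0).Exact ∧
    (∀ j : ℕ, (ShortComplex.mk (δ j) (δ (j + 1)) (w j)).Exact)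

section

variable {C : Type*} [Category C] [Abelian C] {d : ℕ} {M : C}

lemma HasInjectiveResolutionOfLength.injective (h : HasInjectiveResolutionOfLength 0 M) :
    Injective M := by
  obtain ⟨I, ι, δ, w0, w, hI, hZ, hι, he, -⟩ := h
  have : Epi ι := he.epi_f ((hZ 1 one_pos).eq_of_tgt _ _)
  have : IsIso ι := isIso_of_mono_of_epi ι
  exact Injective.of_iso (asIso ι).symm (hI 0 le_rfl)

lemma HasInjectiveResolutionOfLength.of_injective (hM : Injective M) :
    HasInjectiveResolutionOfLength 0 M := by
  refine ⟨fun | 0 => M | _ + 1 => (⊥_ C), 𝟙 M, fun _ => 0, by simp, by simp, ?_, ?_,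
    inferInstanceAs (Mono (𝟙 M)), ?_, ?_⟩
  · intro j hj
    obtain rfl : j = 0 := by lia
    exact hM
  · rintro (_ | j) hj
    · lia
    · exact initialIsInitial.isZero
  · exact (ShortComplex.exact_iff_epi _ rfl).2 (inferInstanceAs (Epi (𝟙 M)))
  · intro j
    exact ShortComplex.exact_of_isZero_X₂ _ initialIsInitial.isZero

lemma HasInjectiveResolutionOfLength.exists_shortExact
    (h : HasInjectiveResolutionOfLength (d + 1) M) :
    ∃ S : ShortComplex C, S.ShortExact ∧ S.X₁ = M ∧ Injective S.X₂ ∧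
      HasInjectiveResolutionOfLength d S.X₃ := by
  obtain ⟨I, ι, δ, w0, w, hI, hZ, hι, he0, he⟩ := h
  have hp : Epi (kernel.lift (δ 1) (δ 0) (w 0)) := (he 0).epi_kernelLift
  have w' : ι ≫ kernel.lift (δ 1) (δ 0) (w 0) = 0 := by
    rw [← cancel_mono (kernel.ι (δ 1))]
    simp [w0]
  let φ : ShortComplex.mk ι (kernel.lift (δ 1) (δ 0) (w 0)) w' ⟶ ShortComplex.mk ι (δ 0) w0 :=
    { τ₁ := 𝟙 _, τ₂ := 𝟙 _, τ₃ := kernel.ι (δ 1) }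
  have : Epi φ.τ₁ := inferInstanceAs (Epi (𝟙 M))
  have : IsIso φ.τ₂ := inferInstanceAs (IsIso (𝟙 (I 0)))
  have : Mono φ.τ₃ := inferInstanceAs (Mono (kernel.ι (δ 1)))
  refine ⟨ShortComplex.mk ι _ w',
    { exact := (ShortComplex.exact_iff_of_epi_of_isIso_of_mono φ).2 he0
      mono_f := hι
      epi_g := hp }, rfl, hI 0 (by lia), ?_⟩
  exact ⟨fun j => I (j + 1), kernel.ι (δ 1), fun j => δ (j + 1), kernel.condition _,
    fun j => w (j + 1), fun j hj => hI _ (by lia), fun j hj => hZ _ (by lia), inferInstance,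
    ShortComplex.exact_kernel _, fun j => he (j + 1)⟩

lemma CategoryTheory.ShortComplex.ShortExact.hasInjectiveResolutionOfLength_succ
    {S : ShortComplex C} (hS : S.ShortExact) (h₂ : Injective S.X₂)
    (h₃ : HasInjectiveResolutionOfLength d S.X₃) :
    HasInjectiveResolutionOfLength (d + 1) S.X₁ := by
  obtain ⟨I, ι, δ, w0, w, hI, hZ, hι, he0, he⟩ := h₃
  have := hS.mono_f
  have := hS.epi_g
  have w0' : S.f ≫ S.g ≫ ι = 0 := by simp
  have w1' : (S.g ≫ ι) ≫ δ 0 = 0 := by simp [w0]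
  refine ⟨fun | 0 => S.X₂ | j + 1 => I j, S.f, fun | 0 => S.g ≫ ι | j + 1 => δ j, w0',
    fun | 0 => w1' | j + 1 => w j, ?_, ?_, hS.mono_f, ?_, ?_⟩
  · rintro (_ | j) hj
    · exact h₂
    · exact hI j (by lia)
  · rintro (_ | j) hj
    · lia
    · exact hZ j (by lia)
  · let φ : S ⟶ ShortComplex.mk S.f (S.g ≫ ι) w0' := { τ₁ := 𝟙 _, τ₂ := 𝟙 _, τ₃ := ι }
    have : Epi φ.τ₁ := inferInstanceAs (Epi (𝟙 S.X₁))
    have : IsIso φ.τ₂ := inferInstanceAs (IsIso (𝟙 S.X₂))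
    have : Mono φ.τ₃ := hι
    exact (ShortComplex.exact_iff_of_epi_of_isIso_of_mono φ).1 hS.exact
  · rintro (_ | j)
    · let φ : ShortComplex.mk (S.g ≫ ι) (δ 0) w1' ⟶ ShortComplex.mk ι (δ 0) w0 :=
        { τ₁ := S.g, τ₂ := 𝟙 _, τ₃ := 𝟙 _ }
      have : Epi φ.τ₁ := hS.epi_g
      have : IsIso φ.τ₂ := inferInstanceAs (IsIso (𝟙 (I 0)))
      have : Mono φ.τ₃ := inferInstanceAs (Mono (𝟙 (I 1)))
      exact (ShortComplex.exact_iff_of_epi_of_isIso_of_mono φ).2 he0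
    · exact he j

lemma HasInjectiveResolutionOfLength.hasInjectiveDimensionLE
    (h : HasInjectiveResolutionOfLength d M) : HasInjectiveDimensionLE M d := by
  induction d generalizing M with
  | zero =>
    have := h.injective
    infer_instance
  | succ d ih =>
    obtain ⟨S, hS, rfl, h₂, h₃⟩ := h.exists_shortExact
    exact (hS.hasInjectiveDimensionLT_X₃_iff d h₂).1 (ih h₃)

lemma HasInjectiveResolutionOfLength.of_hasInjectiveDimensionLE [EnoughInjectives C]
    (h : HasInjectiveDimensionLE M d) : HasInjectiveResolutionOfLength d M := by
  induction d generalizing M with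
  | zero => exact .of_injective (injective_iff_hasInjectiveDimensionLT_one.2 h)
  | succ d ih =>
    obtain ⟨p⟩ := EnoughInjectives.presentation M
    have hS := p.shortExact_shortComplex
    exact hS.hasInjectiveResolutionOfLength_succ p.injective
      (ih ((hS.hasInjectiveDimensionLT_X₃_iff d p.injective).2 h))

end

/-- If `L ⊣ U` with both functors exact, then `Ext (L.obj N) M (n + 1)` vanishes as soon as
`U.obj M` has injective dimension at most `n`. -/
lemma CategoryTheory.Adjunction.ext_eq_zero_of_hasInjectiveDimensionLE
    {A B : Type*} [Category A] [Category B] [Abelian A] [Abelian B] [EnoughInjectives A]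
    [HasExt A] {L : B ⥤ A} {U : A ⥤ B} (adj : L ⊣ U)
    [PreservesFiniteLimits L] [PreservesFiniteLimits U] [PreservesFiniteColimits U]
    (N : B) (n : ℕ) (M : A) (hM : HasInjectiveDimensionLE (U.obj M) n)
    (x : Abelian.Ext (L.obj N) M (n + 1)) : x = 0 := by
  have : U.Additive := Functor.additive_of_preserves_binary_products U
  induction n generalizing M with
  | zero =>
    obtain ⟨p⟩ := EnoughInjectives.presentation M
    have hS := p.shortExact_shortComplex
    have hUM : Injective (U.obj M) := injective_iff_hasInjectiveDimensionLT_one.2 hM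
    have hUS := hS.map_of_exact U
    have : Injective (p.shortComplex.map U).X₁ := hUM
    obtain ⟨s, hs⟩ : ∃ s : U.obj p.shortComplex.X₃ ⟶ U.obj p.shortComplex.X₂,
        s ≫ U.map p.shortComplex.g = 𝟙 _ :=
      ⟨hUS.splittingOfInjective.s, hUS.splittingOfInjective.s_g⟩
    have := p.injective
    obtain ⟨x₃, rfl⟩ := Abelian.Ext.covariant_sequence_exact₁ _ hS x
      (Abelian.Ext.eq_zero_of_injective _) rfl
    obtain ⟨y, rfl⟩ := Abelian.Ext.homEquiv₀.symm.surjective x₃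
    let z : L.obj N ⟶ p.shortComplex.X₂ := (adj.homEquiv _ _).symm (adj.homEquiv _ _ y ≫ s)
    have hz : z ≫ p.shortComplex.g = y := by
      apply (adj.homEquiv _ _).injective
      rw [adj.homEquiv_naturality_right, Equiv.apply_symm_apply, Category.assoc, hs,
        Category.comp_id]
    rw [Abelian.Ext.homEquiv₀_symm_apply, ← hz, ← Abelian.Ext.mk₀_comp_mk₀,
      Abelian.Ext.comp_assoc_of_second_deg_zero, hS.comp_extClass, Abelian.Ext.comp_zero]
  | succ n ih =>
    obtain ⟨p⟩ := EnoughInjectives.presentation M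
    have hS := p.shortExact_shortComplex
    have := p.injective
    obtain ⟨x₃, rfl⟩ := Abelian.Ext.covariant_sequence_exact₁ _ hS x
      (Abelian.Ext.eq_zero_of_injective _) rfl
    rw [ih _ (((hS.map_of_exact U).hasInjectiveDimensionLT_X₃_iff n
      (adj.map_injective _ p.injective)).2 hM) x₃, Abelian.Ext.zero_comp]

/-- If `L ⊣ U` is an adjunction of exact functors between abelian categories with enough
injectives and every object `N` of `A` admits a two-step resolution
`0 → L(N₁) → L(N₂) → N → 0` by objects induced from `B`, then finite injective dimension
`≤ d` of `B` implies injective dimension `≤ d + 1` of `A`. -/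
theorem injDim_le_succ_of_two_step_resolution
    {A B : Type*} [Category A] [Category B] [Abelian A] [Abelian B]
    [EnoughInjectives A] [EnoughInjectives B]
    (L : B ⥤ A) (U : A ⥤ B) (adj : L ⊣ U)
    [PreservesFiniteLimits L] [PreservesFiniteColimits L]
    [PreservesFiniteLimits U] [PreservesFiniteColimits U]
    (hres : ∀ N : A, ∃ (N₁ N₂ : B) (f : L.obj N₁ ⟶ L.obj N₂) (g : L.obj N₂ ⟶ N)
      (w : f ≫ g = 0), Mono f ∧ Epi g ∧ (ShortComplex.mk f g w).Exact)
    (d : ℕ) (h : ∀ N : B, HasInjectiveResolutionOfLength d N) :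
    ∀ M : A, HasInjectiveResolutionOfLength (d + 1) M := by
  intro M
  let := HasExt.standard A
  refine .of_hasInjectiveDimensionLE ((hasInjectiveDimensionLT_iff _ _).2 fun i hi N x => ?_)
  obtain ⟨i, rfl⟩ := Nat.exists_eq_add_of_le' (show 2 ≤ i by lia)
  obtain ⟨N₁, N₂, f, g, w, hf, hg, hfg⟩ := hres N
  have hS : (ShortComplex.mk f g w).ShortExact := { exact := hfg }
  have hM : HasInjectiveDimensionLE (U.obj M) d := (h _).hasInjectiveDimensionLE
  obtain ⟨x₁, rfl⟩ := Abelian.Ext.contravariant_sequence_exact₃ hS M x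
    (adj.ext_eq_zero_of_hasInjectiveDimensionLE N₂ (i + 1) M
      (hasInjectiveDimensionLT_of_ge _ (d + 1) _ (by lia)) _) (add_comm 1 (i + 1))
  rw [adj.ext_eq_zero_of_hasInjectiveDimensionLE N₁ i M
    (hasInjectiveDimensionLT_of_ge _ (d + 1) _ (by lia)) x₁, Abelian.Ext.comp_zero]
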